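/- For p an odd prime, the number of quaternions x over Z/pZ with norm n(x) = 0 and trace t(x) ≠ 0 is p^3 - p = p(p-1)(p+1). -/

import Mathlib

/-!
Over a finite field of odd characteristic `-1` is a sum of two squares, so the quaternions are
isomorphic to the `2 × 2` matrices, the norm becoming the determinant and the trace the matrix
trace. Over a field with `q` elements there are
`q ^ 4 - (q ^ 2 - 1) * (q ^ 2 - q) = q ^ 3 + q ^ 2 - q` singular `2 × 2` matrices, and `q ^ 2` of
them have trace zero.
-/

open Matrix Quaternion

section Splitting

variable {R : Type*} [CommRing R] {a b : R}

/-- The images of `i`, `j` and `k` under the splitting of the quaternions attached to a solution of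
`a ^ 2 + b ^ 2 = -1`. -/
def matrixQuaternionBasis (hab : a ^ 2 + b ^ 2 = -1) :
    QuaternionAlgebra.Basis (Matrix (Fin 2) (Fin 2) R) (-1 : R) 0 (-1) where
  i := !![0, -1; 1, 0]
  j := !![a, b; b, -a]
  k := !![-b, a; a, b]
  i_mul_i := by simp [one_fin_two]
  j_mul_j := by
    simp only [mul_fin_two, one_fin_two, smul_of, smul_cons, smul_empty, ← hab, smul_eq_mul]
    ring_nf
  i_mul_j := by simp
  j_mul_i := by simp

lemma lift_matrixQuaternionBasis (hab : a ^ 2 + b ^ 2 = -1) (x : ℍ[R]) :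
    (matrixQuaternionBasis hab).lift x =
      !![x.re + a * x.imJ - b * x.imK, -x.imI + b * x.imJ + a * x.imK;
        x.imI + b * x.imJ + a * x.imK, x.re - a * x.imJ + b * x.imK] := by
  simp only [QuaternionAlgebra.Basis.lift, matrixQuaternionBasis, Algebra.algebraMap_eq_smul_one,
    one_fin_two, smul_of, smul_cons, smul_empty, smul_eq_mul, of_add_of, cons_add_cons,
    empty_add_empty]
  ring_nf

variable [Invertible (2 : R)]

/-- The inverse of the splitting of the quaternions attached to a solution of
`a ^ 2 + b ^ 2 = -1`, read off from the sums and differences of the entries of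
`lift_matrixQuaternionBasis`. -/
def quaternionOfMatrix (a b : R) (A : Matrix (Fin 2) (Fin 2) R) : ℍ[R] :=
  ⟨⅟2 * (A 0 0 + A 1 1), ⅟2 * (A 1 0 - A 0 1),
    -⅟2 * (a * (A 0 0 - A 1 1) + b * (A 0 1 + A 1 0)),
    ⅟2 * (b * (A 0 0 - A 1 1) - a * (A 0 1 + A 1 0))⟩

lemma quaternionOfMatrix_lift (hab : a ^ 2 + b ^ 2 = -1) (x : ℍ[R]) :
    quaternionOfMatrix a b ((matrixQuaternionBasis hab).lift x) = x := by
  have half : (⅟2 : R) * 2 = 1 := invOf_mul_self 2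
  rw [lift_matrixQuaternionBasis]
  ext <;> simp only [quaternionOfMatrix, of_apply, cons_val_zero, cons_val_one, cons_val'] <;> grind

lemma lift_quaternionOfMatrix (hab : a ^ 2 + b ^ 2 = -1) (A : Matrix (Fin 2) (Fin 2) R) :
    (matrixQuaternionBasis hab).lift (quaternionOfMatrix a b A) = A := by
  have half : (⅟2 : R) * 2 = 1 := invOf_mul_self 2
  rw [lift_matrixQuaternionBasis]
  simp only [← Matrix.ext_iff, Fin.forall_fin_two, of_apply, cons_val', cons_val_zero,
    cons_val_one, cons_val_fin_one, quaternionOfMatrix]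
  grind

/-- The splitting of the quaternions over `R` attached to a solution of `a ^ 2 + b ^ 2 = -1`, as an
isomorphism with the algebra of `2 × 2` matrices. -/
def quaternionEquivMatrix (hab : a ^ 2 + b ^ 2 = -1) : ℍ[R] ≃ₐ[R] Matrix (Fin 2) (Fin 2) R where
  __ := (matrixQuaternionBasis hab).liftHom
  invFun := quaternionOfMatrix a b
  left_inv := quaternionOfMatrix_lift hab
  right_inv := lift_quaternionOfMatrix hab

lemma quaternionEquivMatrix_apply (hab : a ^ 2 + b ^ 2 = -1) (x : ℍ[R]) :
    quaternionEquivMatrix hab x =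
      !![x.re + a * x.imJ - b * x.imK, -x.imI + b * x.imJ + a * x.imK;
        x.imI + b * x.imJ + a * x.imK, x.re - a * x.imJ + b * x.imK] :=
  lift_matrixQuaternionBasis hab x

lemma det_quaternionEquivMatrix (hab : a ^ 2 + b ^ 2 = -1) (x : ℍ[R]) :
    (quaternionEquivMatrix hab x).det = normSq x := by
  rw [quaternionEquivMatrix_apply, det_fin_two_of, normSq_def']
  linear_combination -(x.imJ ^ 2 + x.imK ^ 2) * hab

lemma trace_quaternionEquivMatrix (hab : a ^ 2 + b ^ 2 = -1) (x : ℍ[R]) :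
    (quaternionEquivMatrix hab x).trace = 2 * x.re := by
  rw [quaternionEquivMatrix_apply, trace_fin_two_of]
  ring

end Splitting

section Counting

lemma ncard_det_eq_zero_add_card_GL (n F : Type*) [Fintype n] [DecidableEq n] [Field F]
    [Finite F] : {A : Matrix n n F | A.det = 0}.ncard + Nat.card (GL n F) =
      Nat.card (Matrix n n F) := by
  have range_val : Set.range (Units.val : GL n F → Matrix n n F) = {A | A.det = 0}ᶜ := by
    ext A
    exact (isUnit_iff_isUnit_det A).trans isUnit_iff_ne_zero
  rw [← Nat.card_range_of_injective (Units.val_injective (α := Matrix n n F)), range_val,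
    Nat.card_coe_set_eq, Set.ncard_add_ncard_compl]

lemma det_eq_zero_and_trace_eq_zero_fin_two_iff {R : Type*} [CommRing R]
    {A : Matrix (Fin 2) (Fin 2) R} :
    A.det = 0 ∧ A.trace = 0 ↔ A 0 1 * A 1 0 = -A 0 0 ^ 2 ∧ A 1 1 = -A 0 0 := by
  grind [det_fin_two, trace_fin_two]

variable (F : Type*) [Field F]

lemma ncard_det_eq_zero_and_trace_eq_zero_fin_two :
    {A : Matrix (Fin 2) (Fin 2) F | A.det = 0 ∧ A.trace = 0}.ncard = Nat.card F ^ 2 := by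
  classical
  -- When `A 0 1 ≠ 0` the other off-diagonal entry is determined by `A 0 0`; when `A 0 1 = 0` the
  -- diagonal vanishes and `A 1 0` is free.
  let coords (A : Matrix (Fin 2) (Fin 2) F) : F × F :=
    (A 0 1, if A 0 1 = 0 then A 1 0 else A 0 0)
  have coords_bijOn : Set.BijOn coords {A | A.det = 0 ∧ A.trace = 0} Set.univ := by
    simp only [det_eq_zero_and_trace_eq_zero_fin_two_iff]
    refine ⟨Set.mapsTo_univ _ _, fun A hA B hB hAB ↦ ?_, fun ⟨y, x⟩ _ ↦ ?_⟩
    · obtain ⟨hA₁, hA₂⟩ := hA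
      obtain ⟨hB₁, hB₂⟩ := hB
      simp only [coords, Prod.mk.injEq] at hAB
      have h₀₀ : A 0 0 = B 0 0 := by grind
      have h₁₀ : A 1 0 = B 1 0 := by grind
      rw [eta_fin_two A, eta_fin_two B, hAB.1, h₀₀, h₁₀, hA₂, hB₂, h₀₀]
    · by_cases hy : y = 0
      · exact ⟨!![0, 0; x, 0], by simp, by simp [coords, hy]⟩
      · exact ⟨!![x, y; -x ^ 2 / y, -x], by simp [mul_div_cancel₀, hy], by simp [coords, hy]⟩
  rw [coords_bijOn.ncard_eq, Set.ncard_univ, Nat.card_prod, sq]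

variable [Finite F]

lemma ncard_det_eq_zero_fin_two :
    {A : Matrix (Fin 2) (Fin 2) F | A.det = 0}.ncard =
      Nat.card F ^ 3 + Nat.card F ^ 2 - Nat.card F := by
  have := Fintype.ofFinite F
  have card_pos : 1 ≤ Nat.card F := Nat.card_pos
  have total := ncard_det_eq_zero_add_card_GL (Fin 2) F
  have card_GL : Nat.card (GL (Fin 2) F) =
      (Nat.card F ^ 2 - 1) * (Nat.card F ^ 2 - Nat.card F) := by
    simp [card_GL_field, Fin.prod_univ_two]
  have card_matrix : Nat.card (Matrix (Fin 2) (Fin 2) F) = Nat.card F ^ 4 := by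
    rw [Module.natCard_eq_pow_finrank (K := F), Module.finrank_matrix]
    simp
  rw [card_GL, card_matrix] at total
  have one_le_sq : 1 ≤ Nat.card F ^ 2 := Nat.one_le_pow _ _ card_pos
  have card_le_sq : Nat.card F ≤ Nat.card F ^ 2 := Nat.le_self_pow two_ne_zero _
  refine Nat.eq_sub_of_add_eq ?_
  zify [one_le_sq, card_le_sq] at total ⊢
  linear_combination total

lemma ncard_det_eq_zero_and_trace_ne_zero_fin_two :
    {A : Matrix (Fin 2) (Fin 2) F | A.det = 0 ∧ A.trace ≠ 0}.ncard =
      Nat.card F ^ 3 - Nat.card F := by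
  have split : {A : Matrix (Fin 2) (Fin 2) F | A.det = 0 ∧ A.trace ≠ 0} =
      {A | A.det = 0} \ {A | A.det = 0 ∧ A.trace = 0} := by
    ext A
    simp +contextual [iff_def]
  rw [split, Set.ncard_sdiff fun A hA ↦ hA.1, ncard_det_eq_zero_fin_two,
    ncard_det_eq_zero_and_trace_eq_zero_fin_two]
  omega

end Counting

theorem card_norm_zero_trace_nonzero_general (F : Type*) [Field F] [Finite F]
    (h2 : (2 : F) ≠ 0) :
    {x : ℍ[F] |
      x.re ^ 2 + x.imI ^ 2 + x.imJ ^ 2 + x.imK ^ 2 = 0 ∧ 2 * x.re ≠ 0}.ncard =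
        Nat.card F ^ 3 - Nat.card F := by
  have := invertibleOfNonzero h2
  obtain ⟨a, b, hab⟩ : ∃ a b : F, a ^ 2 + b ^ 2 = -1 := by
    have : NeZero (ringChar F) := ⟨CharP.ringChar_ne_zero_of_finite F⟩
    obtain ⟨a, b, hab⟩ := CharP.sq_add_sq F (ringChar F) (-1)
    exact ⟨a, b, by simpa using hab⟩
  have preimage : {x : ℍ[F] |
      x.re ^ 2 + x.imI ^ 2 + x.imJ ^ 2 + x.imK ^ 2 = 0 ∧ 2 * x.re ≠ 0} =
      quaternionEquivMatrix hab ⁻¹' {A | A.det = 0 ∧ A.trace ≠ 0} := by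
    ext x
    simp only [Set.mem_preimage, Set.mem_ofPred_eq, det_quaternionEquivMatrix,
      trace_quaternionEquivMatrix, normSq_def']
  rw [preimage, ← ncard_det_eq_zero_and_trace_ne_zero_fin_two]
  exact Set.ncard_preimage_of_injective_subset_range (quaternionEquivMatrix hab).injective
    fun A _ ↦ (quaternionEquivMatrix hab).surjective A

theorem card_norm_zero_trace_nonzero (p : ℕ) (hp : p.Prime) (hodd : Odd p) [Fact p.Prime] :
    {x : Quaternion (ZMod p) |
      x.re ^ 2 + x.imI ^ 2 + x.imJ ^ 2 + x.imK ^ 2 = 0 ∧ 2 * x.re ≠ 0}.ncard = p ^ 3 - p := by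
  simpa using card_norm_zero_trace_nonzero_general (ZMod p)
    (Ring.two_ne_zero (by simpa [ZMod.ringChar_zmod_n] using hodd.ne_two_of_dvd_nat dvd_rfl))
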